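/- Let X be a Tychonoff topological space. Then C_k(X) is productively countably tight if and only if X is strongly Alster. -/

import Mathlib

open Set Topology

universe u

/-- A bornology on `X`: a collection of subsets covering `X`, closed under
taking subsets and under finite unions. -/
structure IsBornology {X : Type*} (𝔅 : Set (Set X)) : Prop where
  covers : ⋃₀ 𝔅 = Set.univ
  empty_mem : ∅ ∈ 𝔅
  subset_mem : ∀ ⦃A B : Set X⦄, B ∈ 𝔅 → A ⊆ B → A ∈ 𝔅
  union_mem : ∀ ⦃A B : Set X⦄, A ∈ 𝔅 → B ∈ 𝔅 → A ∪ B ∈ 𝔅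

/-- `𝔅` has a compact base: every member of `𝔅` is contained in a compact member of `𝔅`. -/
def HasCompactBase {X : Type*} [TopologicalSpace X] (𝔅 : Set (Set X)) : Prop :=
  ∀ B ∈ 𝔅, ∃ K ∈ 𝔅, IsCompact K ∧ B ⊆ K

/-- The set of continuous real-valued functions on `X` (as a bare type, to be
topologized by a bornology). -/
def CFn (X : Type u) [TopologicalSpace X] : Type u := {f : X → ℝ // Continuous f}

/-- The zero function as an element of `CFn X`. -/
def zeroFn (X : Type u) [TopologicalSpace X] : CFn X := ⟨fun _ => 0, continuous_const⟩

/-- The basic "ball" `⟨B, ε⟩[f] = {g : ∀ x ∈ B, |f x − g x| < ε}`. -/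
def unifBall {X : Type u} [TopologicalSpace X] (f : CFn X) (B : Set X) (ε : ℝ) :
    Set (CFn X) :=
  {g | ∀ x ∈ B, |f.1 x - g.1 x| < ε}

/-- The topology of uniform convergence on members of a bornology `𝔅`:
a set is open iff around each of its points it contains a basic ball
`⟨B, ε⟩[f]` with `B ∈ 𝔅`, `ε > 0`.  This makes `CFn X` into `C_𝔅(X)`. -/
def bornTopology {X : Type u} [TopologicalSpace X] (𝔅 : Set (Set X))
    (hB : IsBornology 𝔅) : TopologicalSpace (CFn X) where
  IsOpen U := ∀ f ∈ U, ∃ B ∈ 𝔅, ∃ ε > (0 : ℝ), unifBall f B ε ⊆ U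
  isOpen_univ := fun f _ => ⟨∅, hB.empty_mem, 1, one_pos, fun _ _ => trivial⟩
  isOpen_inter := by
    intro U V hU hV f hf
    obtain ⟨B₁, hB₁, ε₁, hε₁, h₁⟩ := hU f hf.1
    obtain ⟨B₂, hB₂, ε₂, hε₂, h₂⟩ := hV f hf.2
    refine ⟨B₁ ∪ B₂, hB.union_mem hB₁ hB₂, min ε₁ ε₂, lt_min hε₁ hε₂, fun g hg => ⟨?_, ?_⟩⟩
    · exact h₁ fun x hx => lt_of_lt_of_le (hg x (Or.inl hx)) (min_le_left _ _)
    · exact h₂ fun x hx => lt_of_lt_of_le (hg x (Or.inr hx)) (min_le_right _ _)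
  isOpen_sUnion := by
    intro S hS f hf
    obtain ⟨U, hU, hfU⟩ := hf
    obtain ⟨B, hB', ε, hε, h⟩ := hS U hU f hfU
    exact ⟨B, hB', ε, hε, h.trans (Set.subset_sUnion_of_mem hU)⟩

/-- `Ω_z`: the family of all subsets of `Z ∖ {z}` having `z` in their closure. -/
def OmegaAt {Z : Type*} [TopologicalSpace Z] (z : Z) : Set (Set Z) :=
  {A | A ⊆ {z}ᶜ ∧ z ∈ closure A}

/-- `𝒢` is a `𝔅`-cover of `X`: every member of `𝔅` is contained in a member of `𝒢`. -/
def IsBCover {X : Type*} (𝔅 : Set (Set X)) (𝒢 : Set (Set X)) : Prop :=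
  ∀ B ∈ 𝔅, ∃ G ∈ 𝒢, B ⊆ G

/-- `𝒪_𝔅`: the family of all open `𝔅`-covers of `X`. -/
def OpenBCovers {X : Type*} [TopologicalSpace X] (𝔅 : Set (Set X)) : Set (Set (Set X)) :=
  {𝒰 | (∀ U ∈ 𝒰, IsOpen U) ∧ IsBCover 𝔅 𝒰}

/-- `𝒢` is a K-cover of `X`: every compact subset of `X` is contained in a member of `𝒢`. -/
def IsKCover {X : Type*} [TopologicalSpace X] (𝒢 : Set (Set X)) : Prop :=
  ∀ K : Set X, IsCompact K → ∃ G ∈ 𝒢, K ⊆ G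

/-- `𝒦`: the family of all open K-covers of `X`. -/
def KCovers (X : Type*) [TopologicalSpace X] : Set (Set (Set X)) :=
  {𝒰 | (∀ U ∈ 𝒰, IsOpen U) ∧ IsKCover 𝒰}

/-- Player II has a winning strategy in the game `G₁(𝒜, 𝒞)` (of length `ω`):
a function assigning to each finite sequence `(A₀, …, Aₙ)` of moves of player I an
element of `Aₙ`, such that in any play following it the chosen points form a member of `𝒞`. -/
def G1WinII {T : Type*} (𝒜 𝒞 : Set (Set T)) : Prop :=
  ∃ σ : (n : ℕ) → (Fin (n + 1) → Set T) → T,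
    (∀ (n : ℕ) (h : Fin (n + 1) → Set T), (∀ i, h i ∈ 𝒜) → σ n h ∈ h (Fin.last n)) ∧
    ∀ A : ℕ → Set T, (∀ n, A n ∈ 𝒜) →
      (Set.range fun n => σ n fun i => A i.1) ∈ 𝒞

/-- Player II has a winning strategy in the transfinite game `G₁^α(𝒜, 𝒞)` of length `α`. -/
def G1WinIIOrd {T : Type*} (α : Ordinal.{0}) (𝒜 𝒞 : Set (Set T)) : Prop :=
  ∃ σ : (γ : {γ : Ordinal.{0} // γ < α}) → ({δ : Ordinal.{0} // δ ≤ γ.1} → Set T) → T,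
    (∀ (γ : {γ : Ordinal.{0} // γ < α}) (h : {δ : Ordinal.{0} // δ ≤ γ.1} → Set T),
      (∀ δ, h δ ∈ 𝒜) → σ γ h ∈ h ⟨γ.1, le_rfl⟩) ∧
    ∀ A : {γ : Ordinal.{0} // γ < α} → Set T, (∀ γ, A γ ∈ 𝒜) →
      (Set.range fun γ : {γ : Ordinal.{0} // γ < α} =>
        σ γ fun δ => A ⟨δ.1, lt_of_le_of_lt δ.2 γ.2⟩) ∈ 𝒞

/-- The selection principle `S₁(𝒜, 𝒞)`. -/
def S1 {T : Type*} (𝒜 𝒞 : Set (Set T)) : Prop :=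
  ∀ A : ℕ → Set T, (∀ n, A n ∈ 𝒜) →
    ∃ a : ℕ → T, (∀ n, a n ∈ A n) ∧ Set.range a ∈ 𝒞

/-- `Z` has countable tightness. -/
def CountablyTight (Z : Type*) [TopologicalSpace Z] : Prop :=
  ∀ (z : Z) (A : Set Z), z ∈ closure A → ∃ B ⊆ A, B.Countable ∧ z ∈ closure B

/-- `Z` is productively countably tight: `Z × Y` has countable tightness
for every countably tight space `Y`. -/
def ProductivelyCountablyTight (Z : Type u) [TopologicalSpace Z] : Prop :=
  ∀ (Y : Type u) [TopologicalSpace Y], CountablyTight Y → CountablyTight (Z × Y)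

/-- `Z` has tightness at most `κ`. -/
def TightnessLE (Z : Type u) [TopologicalSpace Z] (κ : Cardinal.{u}) : Prop :=
  ∀ (z : Z) (A : Set Z), z ∈ closure A → ∃ B ⊆ A, Cardinal.mk B ≤ κ ∧ z ∈ closure B

/-- `κ ∈ Sp(Z)`: for every space `Y` of tightness at most `κ`, the product `Z × Y`
has tightness at most `κ`. -/
def MemSp (Z : Type u) [TopologicalSpace Z] (κ : Cardinal.{u}) : Prop :=
  ∀ (Y : Type u) [TopologicalSpace Y], TightnessLE Y κ → TightnessLE (Z × Y) κ

/-- `G` is a `G_κ`-set: an intersection of at most `κ` open sets. -/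
def IsGKappaSet {X : Type u} [TopologicalSpace X] (κ : Cardinal.{u}) (G : Set X) : Prop :=
  ∃ 𝒪 : Set (Set X), (∀ O ∈ 𝒪, IsOpen O) ∧ Cardinal.mk 𝒪 ≤ κ ∧ G = ⋂₀ 𝒪

/-- `G` is a `G_δ`-set: an intersection of countably many open sets. -/
def IsGDeltaSet {X : Type*} [TopologicalSpace X] (G : Set X) : Prop :=
  ∃ 𝒪 : Set (Set X), (∀ O ∈ 𝒪, IsOpen O) ∧ 𝒪.Countable ∧ G = ⋂₀ 𝒪

/-- A family `ℙ` of collections of subsets of `Z` is `κ`-singular at `z`. -/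
def KappaSingularAt {Z : Type u} [TopologicalSpace Z] (κ : Cardinal.{u})
    (ℙ : Set (Set (Set Z))) (z : Z) : Prop :=
  (∀ ξ ∈ ℙ, ∀ A ∈ ξ, Cardinal.mk A ≤ κ) ∧
  (∀ ξ ∈ ℙ, ∀ F : Finset (Set Z), ↑F ⊆ ξ → (⋂₀ (F : Set (Set Z))).Nonempty) ∧
  (∀ O : Set Z, IsOpen O → z ∈ O → ∃ ξ ∈ ℙ, ∃ A ∈ ξ, A ⊆ O) ∧
  (∀ ℰ ⊆ ℙ, Cardinal.mk ℰ ≤ κ → ∃ c : Set (Set Z) → Set Z,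
    (∀ ξ ∈ ℰ, c ξ ∈ ξ) ∧ z ∉ closure (⋃ ξ ∈ ℰ, c ξ))

/-- `X` is an Alster space. -/
def Alster (X : Type*) [TopologicalSpace X] : Prop :=
  ∀ 𝒢 : Set (Set X), (∀ G ∈ 𝒢, IsGDeltaSet G) → IsKCover 𝒢 →
    ∃ 𝒢' ⊆ 𝒢, 𝒢'.Countable ∧ ⋃₀ 𝒢' = Set.univ

/-- `X` is strongly Alster. -/
def StronglyAlster (X : Type*) [TopologicalSpace X] : Prop :=
  ∀ 𝒢 : Set (Set X), (∀ G ∈ 𝒢, IsGDeltaSet G) → IsKCover 𝒢 →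
    ∃ 𝒢' ⊆ 𝒢, 𝒢'.Countable ∧ IsKCover 𝒢'

/-- `X` is productively Lindelöf. -/
def ProductivelyLindelof (X : Type u) [TopologicalSpace X] : Prop :=
  ∀ (Y : Type u) [TopologicalSpace Y], LindelofSpace Y → LindelofSpace (X × Y)

/-- `X` is hemicompact. -/
def Hemicompact (X : Type*) [TopologicalSpace X] : Prop :=
  ∃ K : ℕ → Set X, (∀ n, IsCompact (K n)) ∧ ∀ C : Set X, IsCompact C → ∃ n, C ⊆ K n

theorem aux_nhds_basis {X : Type u} [TopologicalSpace X] (f : C(X, ℝ)) :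
    (𝓝 f).HasBasis (fun p : Set X × ℝ => IsCompact p.1 ∧ 0 < p.2)
      (fun p => {g | ∀ x ∈ p.1, |f x - g x| < p.2}) := by
  have h := nhds_basis_uniformity' (x := f)
    (Filter.HasBasis.compactConvergenceUniformity (α := X) (Metric.uniformity_basis_dist (α := ℝ)))
  exact h

theorem aux_sep {X : Type u} [TopologicalSpace X] [T35Space X] {K O : Set X}
    (hK : IsCompact K) (hO : IsOpen O) (hKO : K ⊆ O) :
    ∃ h : C(X, ℝ), (∀ x ∈ K, h x = 0) ∧ ∀ x ∉ O, h x = 1 := by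
  have key : ∃ f : C(X, ℝ), (∀ x ∈ K, f x < 1 / 2) ∧ ∀ x ∉ O, f x = 1 := by
    refine hK.induction_on (p := fun s => ∃ f : C(X, ℝ), (∀ x ∈ s, f x < 1 / 2) ∧
      ∀ x ∉ O, f x = 1) ⟨ContinuousMap.const X 1, by simp, by simp⟩ ?_ ?_ ?_
    · rintro s t hst ⟨f, h1, h2⟩
      exact ⟨f, fun x hx => h1 x (hst hx), h2⟩
    · rintro s t ⟨f, h1, h2⟩ ⟨g, h3, h4⟩
      refine ⟨f ⊓ g, ?_, fun x hx => by simp [h2 x hx, h4 x hx]⟩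
      rintro x (hx | hx)
      · exact lt_of_le_of_lt (min_le_left (f x) (g x)) (h1 x hx)
      · exact lt_of_le_of_lt (min_le_right (f x) (g x)) (h3 x hx)
    · intro x hx
      obtain ⟨f, hf, h0, h1⟩ :=
        CompletelyRegularSpace.completely_regular_isOpen x O hO (hKO hx)
      have hc : Continuous (fun y => (f y : ℝ)) := continuous_subtype_val.comp hf
      refine ⟨{y | (f y : ℝ) < 1 / 2}, ?_, ⟨fun y => (f y : ℝ), hc⟩, fun y hy => hy, ?_⟩
      · apply mem_nhdsWithin_of_mem_nhds
        apply (isOpen_lt hc continuous_const).mem_nhds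
        simp [h0]
      · intro y hy
        have := h1 hy
        simp [this]
  obtain ⟨f, h1, h2⟩ := key
  refine ⟨⟨fun x => max 0 (2 * f x - 1), by fun_prop⟩, fun x hx => ?_, fun x hx => ?_⟩
  · have := h1 x hx
    show max 0 (2 * f x - 1) = 0
    exact max_eq_left (by linarith)
  · show max 0 (2 * f x - 1) = 1
    rw [h2 x hx]; norm_num

theorem aux_mpr {X : Type u} [TopologicalSpace X] (hX : StronglyAlster X) :
    ProductivelyCountablyTight C(X, ℝ) := by
  rintro Y _ hY ⟨f, y⟩ A hA
  have step : ∀ (K : {K : Set X // IsCompact K}) (n : ℕ), ∃ B ⊆ A, B.Countable ∧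
      (∀ p ∈ B, ∀ x ∈ K.1, |f x - p.1 x| < 1 / ((n : ℝ) + 1)) ∧
      y ∈ closure (Prod.snd '' B) := by
    intro K n
    have hy : y ∈ closure (Prod.snd ''
        {p ∈ A | ∀ x ∈ K.1, |f x - p.1 x| < 1 / ((n : ℝ) + 1)}) := by
      rw [mem_closure_iff_nhds] at hA ⊢
      intro V hV
      have hU : {g : C(X, ℝ) | ∀ x ∈ K.1, |f x - g x| < 1 / ((n : ℝ) + 1)} ∈ 𝓝 f :=
        (aux_nhds_basis f).mem_of_mem (i := (K.1, 1 / ((n : ℝ) + 1))) ⟨K.2, by positivity⟩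
      obtain ⟨⟨g, y'⟩, ⟨h1, h2⟩, h3⟩ := hA _ (prod_mem_nhds hU hV)
      exact ⟨y', h2, (g, y'), ⟨h3, h1⟩, rfl⟩
    obtain ⟨C, hCs, hC, hyC⟩ := hY y _ hy
    have : Nonempty (C(X, ℝ) × Y) := ⟨(f, y)⟩
    replace hCs : ∀ c, c ∈ C → ∃ a, a ∈ {p ∈ A | ∀ x ∈ K.1, |f x - p.1 x| < 1 / ((n : ℝ) + 1)} ∧
        a.2 = c := fun c hc => hCs hc
    choose! s hs using hCs
    refine ⟨s '' C, ?_, hC.image s, ?_, ?_⟩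
    · rintro _ ⟨c, hc, rfl⟩
      exact (hs c hc).1.1
    · rintro _ ⟨c, hc, rfl⟩
      exact (hs c hc).1.2
    · refine closure_mono ?_ hyC
      intro c hc
      exact ⟨s c, ⟨c, hc, rfl⟩, (hs c hc).2⟩
  choose B hBA hBc hB hyB using step
  let G : {K : Set X // IsCompact K} → Set X := fun K =>
    {x | ∀ n, ∀ p ∈ B K n, |f x - p.1 x| < 1 / ((n : ℝ) + 1)}
  obtain ⟨𝒢, h𝒢s, h𝒢c, h𝒢⟩ := hX (range G) (by
    rintro _ ⟨K, rfl⟩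
    refine ⟨⋃ n : ℕ, (fun p : C(X, ℝ) × Y => {x | |f x - p.1 x| < 1 / ((n : ℝ) + 1)}) '' B K n,
      ?_, ?_, ?_⟩
    · intro O hO
      obtain ⟨n, p, hp, rfl⟩ := mem_iUnion.1 hO
      exact isOpen_lt (by fun_prop) continuous_const
    · exact countable_iUnion fun n => (hBc K n).image _
    · ext x
      simp only [G, mem_ofPred_eq, mem_sInter, mem_iUnion, mem_image]
      constructor
      · rintro h _ ⟨n, p, hp, rfl⟩
        exact h n p hp
      · intro h n p hp
        exact h _ ⟨n, p, hp, rfl⟩)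
    (fun K hK => ⟨G ⟨K, hK⟩, ⟨_, rfl⟩, fun x hx n p hp => hB ⟨K, hK⟩ n p hp x hx⟩)
  have : Nonempty {K : Set X // IsCompact K} := ⟨⟨∅, isCompact_empty⟩⟩
  replace h𝒢s : ∀ g, g ∈ 𝒢 → ∃ K, G K = g := fun g hg => h𝒢s hg
  choose! k hk using h𝒢s
  refine ⟨⋃ g ∈ 𝒢, ⋃ n, B (k g) n, ?_, ?_, ?_⟩
  · exact iUnion₂_subset fun g _ => iUnion_subset fun n => hBA _ _
  · exact h𝒢c.biUnion fun g _ => countable_iUnion fun n => hBc _ _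
  · rw [mem_closure_iff_nhds]
    intro W hW
    obtain ⟨U, hU, V, hV, hUV⟩ := mem_nhds_prod_iff.1 hW
    obtain ⟨⟨K, ε⟩, ⟨hK, hε⟩, hKU⟩ := (aux_nhds_basis f).mem_iff.1 hU
    obtain ⟨g, hg, hKg⟩ := h𝒢 K hK
    obtain ⟨n, hn⟩ := exists_nat_one_div_lt hε
    obtain ⟨_, hpV, p, hp, rfl⟩ := mem_closure_iff_nhds.1 (hyB (k g) n) V hV
    refine ⟨p, hUV ⟨hKU ?_, hpV⟩, ?_⟩
    · intro x hx
      have h1 := hKg hx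
      rw [← hk g hg] at h1
      exact (h1 n p hp).trans hn
    · simp only [mem_iUnion]
      exact ⟨g, hg, n, hp⟩

/-- The sequential fan with spines indexed by `I`. -/
inductive AuxFan (I : Type u) : Type u
  | pt : AuxFan I
  | sp : I → ℕ → AuxFan I

instance auxFanTop (I : Type u) : TopologicalSpace (AuxFan I) where
  IsOpen U := AuxFan.pt ∈ U → ∀ i, ∃ N, ∀ n ≥ N, AuxFan.sp i n ∈ U
  isOpen_univ := fun _ _ => ⟨0, fun _ _ => trivial⟩
  isOpen_inter := by
    intro U V hU hV h i
    obtain ⟨N, hN⟩ := hU h.1 i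
    obtain ⟨M, hM⟩ := hV h.2 i
    exact ⟨max N M, fun n hn => ⟨hN n (le_of_max_le_left hn), hM n (le_of_max_le_right hn)⟩⟩
  isOpen_sUnion := by
    rintro S hS ⟨U, hU, h⟩ i
    obtain ⟨N, hN⟩ := hS U hU h i
    exact ⟨N, fun n hn => ⟨U, hU, hN n hn⟩⟩

theorem auxFan_isOpen {I : Type u} (U : Set (AuxFan I)) : IsOpen U ↔
    (AuxFan.pt ∈ U → ∀ i, ∃ N, ∀ n ≥ N, AuxFan.sp i n ∈ U) :=
  Iff.rfl

theorem auxFan_tight (I : Type u) : CountablyTight (AuxFan I) := by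
  intro z A hz
  by_cases hzA : z ∈ A
  · exact ⟨{z}, by simpa using hzA, countable_singleton z, subset_closure rfl⟩
  rw [mem_closure_iff] at hz
  rcases z with _ | ⟨i, n⟩
  · by_cases h : ∃ i, ∀ N, ∃ n ≥ N, AuxFan.sp i n ∈ A
    · obtain ⟨i, hi⟩ := h
      refine ⟨A ∩ range (fun n : ℕ => AuxFan.sp i n), inter_subset_left,
        (countable_range _).mono inter_subset_right, ?_⟩
      rw [mem_closure_iff]
      intro U hU h0
      obtain ⟨N, hN⟩ := (auxFan_isOpen U).1 hU h0 i
      obtain ⟨n, hn, hnA⟩ := hi N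
      exact ⟨_, hN n hn, hnA, n, rfl⟩
    · push Not at h
      obtain ⟨x, hx, hxA⟩ := hz Aᶜ ((auxFan_isOpen _).2 fun _ i => h i) hzA
      exact absurd hxA hx
  · obtain ⟨x, hx, hxA⟩ := hz {AuxFan.sp i n}
      ((auxFan_isOpen _).2 fun h => by cases h) rfl
    rw [mem_singleton_iff] at hx
    subst hx
    exact absurd hxA hzA

theorem aux_mp {X : Type u} [TopologicalSpace X] [T35Space X]
    (hX : ProductivelyCountablyTight C(X, ℝ)) : StronglyAlster X := by
  intro 𝒢 h𝒢 hcov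
  by_contra hcon
  have hG : ∀ K : {K : Set X // IsCompact K}, ∃ G ∈ 𝒢, ∃ O : ℕ → Set X, K.1 ⊆ G ∧
      (∀ n, IsOpen (O n)) ∧ G = ⋂ n, O n ∧ Antitone O := by
    intro K
    obtain ⟨G, hG, hKG⟩ := hcov K.1 K.2
    obtain ⟨𝒪, h1, h2, h3⟩ := h𝒢 G hG
    obtain ⟨U, hU⟩ := (h2.insert univ).exists_eq_range (insert_nonempty _ _)
    have hUo : ∀ n, IsOpen (U n) := by
      intro n
      have : U n ∈ insert univ 𝒪 := hU ▸ mem_range_self n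
      rcases this with h | h
      · rw [h]; exact isOpen_univ
      · exact h1 _ h
    refine ⟨G, hG, fun n => ⋂ i ∈ Finset.range (n + 1), U i, hKG, ?_, ?_, ?_⟩
    · intro n
      exact isOpen_biInter_finset fun i _ => hUo i
    · have : G = ⋂₀ (insert univ 𝒪) := by rw [sInter_insert, univ_inter, h3]
      rw [this, hU, sInter_range]
      ext x
      simp only [mem_iInter, Finset.mem_range]
      exact ⟨fun h _ i _ => h i, fun h i => h i i (Nat.lt_succ_self i)⟩
    · intro m n hmn x hx
      simp only [mem_iInter, Finset.mem_range] at hx ⊢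
      exact fun i hi => hx i (by omega)
  choose G hG𝒢 O hKG hO hGO hanti using hG
  have hh : ∀ (K : {K : Set X // IsCompact K}) (n : ℕ), ∃ h : C(X, ℝ),
      (∀ x ∈ K.1, h x = 0) ∧ ∀ x ∉ O K n, h x = 1 := by
    intro K n
    refine aux_sep K.2 (hO K n) ((hKG K).trans ?_)
    rw [hGO K]; exact iInter_subset _ n
  choose h h0 h1 using hh
  let e : {K : Set X // IsCompact K} × ℕ → C(X, ℝ) × AuxFan {K : Set X // IsCompact K} :=
    fun d => (h d.1 d.2, AuxFan.sp d.1 d.2)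
  obtain ⟨B, hBs, hBc, hB⟩ := hX (AuxFan {K : Set X // IsCompact K}) (auxFan_tight _)
    ((0 : C(X, ℝ)), AuxFan.pt) (range e) (by
      rw [mem_closure_iff_nhds]
      intro W hW
      obtain ⟨U, hU, V, hV, hUV⟩ := mem_nhds_prod_iff.1 hW
      obtain ⟨⟨K, ε⟩, ⟨hK, hε⟩, hKU⟩ := (aux_nhds_basis (0 : C(X, ℝ))).mem_iff.1 hU
      obtain ⟨V', hV', hV'o, hV'0⟩ := mem_nhds_iff.1 hV
      obtain ⟨N, hN⟩ := (auxFan_isOpen V').1 hV'o hV'0 ⟨K, hK⟩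
      refine ⟨e (⟨K, hK⟩, N), hUV ⟨hKU ?_, hV' (hN N le_rfl)⟩, mem_range_self _⟩
      intro x hx
      have := h0 ⟨K, hK⟩ N x hx
      simpa [e, this] using hε)
  have : Nonempty ({K : Set X // IsCompact K} × ℕ) := ⟨⟨⟨∅, isCompact_empty⟩, 0⟩⟩
  replace hBs : ∀ b, b ∈ B → ∃ d, e d = b := fun b hb => hBs hb
  choose! s hs using hBs
  apply hcon
  refine ⟨(fun b => G (s b).1) '' B, ?_, hBc.image _, ?_⟩
  · rintro _ ⟨b, _, rfl⟩
    exact hG𝒢 _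
  intro C hC
  by_contra hno
  have hno' : ∀ b ∈ B, ¬ C ⊆ G (s b).1 := fun b hb hsub => hno ⟨_, ⟨b, hb, rfl⟩, hsub⟩
  let V : Set (AuxFan {K : Set X // IsCompact K}) :=
    {z | ∀ K n, z = AuxFan.sp K n → C ⊆ G K ∨ ¬ C ⊆ O K n}
  have hVo : IsOpen V := by
    rw [auxFan_isOpen]
    intro _ K
    by_cases hCK : C ⊆ G K
    · refine ⟨0, fun n _ K' n' heq => ?_⟩
      cases heq
      exact Or.inl hCK
    · have : ∃ N, ¬ C ⊆ O K N := by
        by_contra hall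
        push Not at hall
        exact hCK (hGO K ▸ subset_iInter hall)
      obtain ⟨N, hN⟩ := this
      refine ⟨N, fun n hn K' n' heq => ?_⟩
      cases heq
      exact Or.inr fun hsub => hN (hsub.trans (hanti K hn))
  have hV0 : AuxFan.pt ∈ V := fun K n heq => by cases heq
  have hU : {g : C(X, ℝ) | ∀ x ∈ C, |(0 : C(X, ℝ)) x - g x| < 1} ∈ 𝓝 (0 : C(X, ℝ)) :=
    (aux_nhds_basis 0).mem_of_mem (i := (C, 1)) ⟨hC, one_pos⟩
  obtain ⟨b, ⟨hb1, hb2⟩, hbB⟩ :=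
    mem_closure_iff_nhds.1 hB _ (prod_mem_nhds hU (hVo.mem_nhds hV0))
  have hsb := hs b hbB
  rw [← hsb] at hb1 hb2
  rcases hb2 (s b).1 (s b).2 rfl with hc | hc
  · exact hno' b hbB hc
  · apply hc
    intro x hx
    by_contra hxO
    have h3 := hb1 x hx
    have h4 := h1 _ _ x hxO
    simp [e, h4] at h3

/-- `C_k(X)` is productively countably tight iff `X` is strongly Alster. -/
theorem stmt9 {X : Type u} [TopologicalSpace X] [T35Space X] :
    ProductivelyCountablyTight C(X, ℝ) ↔ StronglyAlster X := by
  exact ⟨aux_mp, aux_mpr⟩
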